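/- Under the algorithmic setting below, assume additionally that ∇f is uniformly continuous on a set X ⊆ ℝⁿ containing all iterates {x^k}. Then lim_{k→∞} ‖r(x^k)‖ = 0; in particular, every accumulation point of {x^k} is a stationary point of F (i.e., satisfies 0 ∈ ∇f(x) + ∂φ(x)). -/

import Mathlib

open scoped RealInnerProductSpace
open Filter Metric

noncomputable section

/-- The convex subdifferential of `g` at `y`. -/
def subdiff {n : ℕ} (g : EuclideanSpace ℝ (Fin n) → ℝ) (y : EuclideanSpace ℝ (Fin n)) :
    Set (EuclideanSpace ℝ (Fin n)) :=
  {v | ∀ z, g y + ⟪v, z - y⟫ ≤ g z}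

/-- The proximity operator `prox_g(z)`, the (unique, for convex `g`) minimizer of
`y ↦ g y + (1/2)‖y − z‖²`. -/
noncomputable def proxPt {n : ℕ} (g : EuclideanSpace ℝ (Fin n) → ℝ)
    (z : EuclideanSpace ℝ (Fin n)) : EuclideanSpace ℝ (Fin n) :=
  Classical.epsilon fun p => ∀ y, g p + (1 / 2) * ‖p - z‖ ^ 2 ≤ g y + (1 / 2) * ‖y - z‖ ^ 2

/-- The residual (prox-gradient) mapping `r(x) = x − prox_φ(x − ∇f(x))`. -/
noncomputable def resid {n : ℕ} (f φ : EuclideanSpace ℝ (Fin n) → ℝ)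
    (x : EuclideanSpace ℝ (Fin n)) : EuclideanSpace ℝ (Fin n) :=
  x - proxPt φ (x - gradient f x)

/-- The smallest eigenvalue of a symmetric operator on ℝᵐ, as the infimum of its quadratic
form over the unit sphere. -/
noncomputable def lambdaMin {m : ℕ} (T : EuclideanSpace ℝ (Fin m) →L[ℝ] EuclideanSpace ℝ (Fin m)) :
    ℝ :=
  ⨅ u : {u : EuclideanSpace ℝ (Fin m) // ‖u‖ = 1}, ⟪T u.1, u.1⟫


/-!
Every accepted step decreases `F` by at least a multiple, depending only on a lower bound for
`‖r(xᵏ)‖`, of its length. If `‖r(xᵏ)‖ ≥ ε` for all large `k`, the path of iterates therefore has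
finite length, so the iterates and the Hessian approximations are bounded. Then trial points are
accepted once `μ_k` is large, hence `ν_k` stays bounded; but bounded `μ_k` keeps the trial steps
away from zero, so eventually none is accepted and `ν_k` grows geometrically, a contradiction.
Hence `liminf ‖r(xᵏ)‖ = 0`, and uniform continuity of `r` along the iterates upgrades this to `lim`.
-/
section Sequences

variable {α : Type*} [PseudoMetricSpace α] {x : ℕ → α} {v : ℕ → ℝ}

theorem summable_sub_succ_of_antitone (hv : Antitone v) (hbdd : BddBelow (Set.range v)) :
    Summable fun k => v k - v (k + 1) := by
  obtain ⟨m, hm⟩ := hbdd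
  refine summable_of_sum_range_le (c := v 0 - m) (fun k => sub_nonneg.2 (hv k.le_succ)) fun k => ?_
  rw [Finset.sum_range_sub']
  exact sub_le_sub_left (hm ⟨k, rfl⟩) _

theorem summable_dist_of_mul_dist_le (hv : Antitone v) (hbdd : BddBelow (Set.range v)) {c : ℝ}
    (hc : 0 < c) (hdec : ∀ k, c * dist (x k) (x (k + 1)) ≤ v k - v (k + 1)) :
    Summable fun k => dist (x k) (x (k + 1)) :=
  ((summable_sub_succ_of_antitone hv hbdd).mul_left c⁻¹).of_nonneg_of_le (fun _ => dist_nonneg)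
    fun k => (le_inv_mul_iff₀ hc).2 (hdec k)

theorem mul_dist_le_sub_of_forall_mul_dist_succ_le {c : ℝ} (hc : 0 < c) {k l : ℕ} (hkl : k ≤ l)
    (hdec : ∀ j, k ≤ j → j < l → c * dist (x j) (x (j + 1)) ≤ v j - v (j + 1)) :
    c * dist (x k) (x l) ≤ v k - v l := by
  have htelescope : ∑ j ∈ Finset.Ico k l, (v j - v (j + 1)) = v k - v l := by
    rw [← neg_sub (v l), ← Finset.sum_Ico_sub v hkl, ← Finset.sum_neg_distrib]
    simp only [neg_sub]
  rw [← le_inv_mul_iff₀ hc, ← htelescope, Finset.mul_sum]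
  exact dist_le_Ico_sum_of_dist_le hkl fun {j} hkj hjl => (le_inv_mul_iff₀ hc).2 (hdec j hkj hjl)

/- Between an index `k` with `ε ≤ g (x k)` and the next index `l` with `g (x l) < ε / 2`, every
step is paid for by a decrease of `v`. As `v` converges, `x k` and `x l` get arbitrarily close,
against the gap `ε / 2` between the values of `g`. -/
theorem tendsto_zero_of_frequently_lt_of_mul_dist_le {X : Set α} {g : α → ℝ}
    (hg : UniformContinuousOn g X) (hX : ∀ k, x k ∈ X) (hg0 : ∀ k, 0 ≤ g (x k))
    (hv : Antitone v) (hbdd : BddBelow (Set.range v))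
    (hdec : ∀ ε > 0, ∃ c > 0, ∀ k, ε ≤ g (x k) → c * dist (x k) (x (k + 1)) ≤ v k - v (k + 1))
    (hfreq : ∀ ε > 0, ∃ᶠ k in atTop, g (x k) < ε) :
    Tendsto (fun k => g (x k)) atTop (nhds 0) := by
  rw [Metric.tendsto_atTop]
  intro ε hε
  obtain ⟨c, hc, hdec⟩ := hdec (ε / 2) (half_pos hε)
  obtain ⟨s, hs, hsg⟩ := Metric.uniformContinuousOn_iff.1 hg (ε / 2) (half_pos hε)
  obtain ⟨N, hN⟩ := Metric.cauchySeq_iff.1 (tendsto_atTop_ciInf hv hbdd).cauchySeq (c * s)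
    (mul_pos hc hs)
  refine ⟨N, fun k hk => ?_⟩
  rw [Real.dist_eq, sub_zero, abs_of_nonneg (hg0 k)]
  have hnext : ∃ l, k ≤ l ∧ g (x l) < ε / 2 := frequently_atTop.1 (hfreq _ (half_pos hε)) k
  obtain ⟨hkl, hgl⟩ := Nat.find_spec hnext
  set l := Nat.find hnext
  have hpath : c * dist (x k) (x l) ≤ v k - v l :=
    mul_dist_le_sub_of_forall_mul_dist_succ_le hc hkl fun j hkj hjl =>
      hdec j (not_lt.1 fun hj => Nat.find_min hnext hjl ⟨hkj, hj⟩)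
  have hv_close : v k - v l < c * s := (le_abs_self _).trans_lt (hN k hk l (hk.trans hkl))
  have hx_close : dist (x k) (x l) < s := lt_of_mul_lt_mul_left (hpath.trans_lt hv_close) hc.le
  have hg_close := (le_abs_self _).trans_lt (hsg _ (hX k) _ (hX l) hx_close)
  linarith

theorem exists_pos_forall_le_of_eventually_le {u : ℕ → ℝ} (hu : ∀ k, 0 < u k) {ε : ℝ} (hε : 0 < ε)
    (hle : ∀ᶠ k in atTop, ε ≤ u k) : ∃ e > 0, ∀ k, e ≤ u k := by
  obtain ⟨N, hN⟩ := eventually_atTop.1 hle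
  obtain ⟨j, -, hj⟩ := (Finset.range (N + 1)).exists_min_image u Finset.nonempty_range_add_one
  refine ⟨min ε (u j), lt_min hε (hu j), fun k => ?_⟩
  rcases le_total N k with hk | hk
  · exact (min_le_left _ _).trans (hN k hk)
  · exact (min_le_right _ _).trans (hj k (Finset.mem_range_succ_iff.2 hk))

theorem tendsto_atTop_of_eventually_eq_mul {v : ℕ → ℝ} {σ : ℝ} (hσ : 1 < σ)
    (hpos : ∀ k, 0 < v k) (hv : ∀ᶠ k in atTop, v (k + 1) = σ * v k) :
    Tendsto v atTop atTop := by
  obtain ⟨N, hN⟩ := eventually_atTop.1 hv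
  refine (tendsto_add_atTop_iff_nat N).1 (tendsto_atTop_of_geom_le (hpos _) hσ fun k => ?_)
  rw [add_right_comm, hN _ (Nat.le_add_left N k)]

end Sequences

section Gradient

variable {V : Type*} [NormedAddCommGroup V] [InnerProductSpace ℝ V]

theorem abs_inner_apply_self_le {T : V →L[ℝ] V} {L : ℝ} (hT : ‖T‖ ≤ L) (v : V) :
    |⟪v, T v⟫| ≤ L * ‖v‖ ^ 2 :=
  calc |⟪v, T v⟫| ≤ ‖v‖ * ‖T v‖ := abs_real_inner_le_norm _ _
    _ ≤ ‖v‖ * (L * ‖v‖) := by gcongr; exact T.le_of_opNorm_le hT v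
    _ = L * ‖v‖ ^ 2 := by ring

variable [CompleteSpace V] {f : V → ℝ}

theorem contDiff_one_gradient (hf : ContDiff ℝ 2 f) : ContDiff ℝ 1 (gradient f) :=
  (InnerProductSpace.toDual ℝ V).symm.contDiff.comp (hf.fderiv_right (by norm_num))

theorem continuous_fderiv_gradient (hf : ContDiff ℝ 2 f) : Continuous (fderiv ℝ (gradient f)) :=
  (contDiff_one_gradient hf).continuous_fderiv one_ne_zero

theorem abs_sub_sub_inner_gradient_le {s : Set V} (hs : Convex ℝ s)
    (hf : ∀ z ∈ s, DifferentiableAt ℝ f z) (hf' : ∀ z ∈ s, DifferentiableAt ℝ (gradient f) z)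
    {L : ℝ} (hL : ∀ z ∈ s, ‖fderiv ℝ (gradient f) z‖ ≤ L) {x y : V} (hx : x ∈ s) (hy : y ∈ s) :
    |f y - f x - ⟪gradient f x, y - x⟫| ≤ L * ‖y - x‖ ^ 2 := by
  have hseg : segment ℝ x y ⊆ s := hs.segment_subset hx hy
  have hL0 : 0 ≤ L := (norm_nonneg _).trans (hL x hx)
  have hlip : ∀ z ∈ segment ℝ x y, ‖fderiv ℝ f z - fderiv ℝ f x‖ ≤ L * ‖y - x‖ := fun z hz =>
    calc ‖fderiv ℝ f z - fderiv ℝ f x‖ = ‖gradient f z - gradient f x‖ := by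
          rw [gradient, gradient, ← map_sub, LinearIsometryEquiv.norm_map]
      _ ≤ L * ‖z - x‖ := hs.norm_image_sub_le_of_norm_fderiv_le hf' hL hx (hseg hz)
      _ ≤ L * ‖y - x‖ := by
          gcongr
          exact norm_sub_le_of_mem_segment hz
  have hmvt := (convex_segment x y).norm_image_sub_le_of_norm_fderiv_le' (𝕜 := ℝ)
    (fun z hz => hf z (hseg hz)) hlip (left_mem_segment ℝ x y) (right_mem_segment ℝ x y)
  rwa [Real.norm_eq_abs, ← inner_gradient_left, mul_assoc, ← sq] at hmvt

end Gradient

section Prox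

theorem exists_forall_add_sq_norm_sub_le {V : Type*} [NormedAddCommGroup V]
    [InnerProductSpace ℝ V] [FiniteDimensional ℝ V] {φ : V → ℝ} (hφ : ConvexOn ℝ Set.univ φ)
    (z : V) : ∃ p, ∀ y, φ p + (1 / 2) * ‖p - z‖ ^ 2 ≤ φ y + (1 / 2) * ‖y - z‖ ^ 2 := by
  have hcont : Continuous φ := continuousOn_univ.1 (hφ.continuousOn isOpen_univ)
  obtain ⟨l, c, hlc, -⟩ := hφ.exists_affine_le_of_lt (𝕜 := ℝ) (Set.mem_univ z)
    (sub_one_lt (φ z)) isClosed_univ (hcont.lowerSemicontinuous.lowerSemicontinuousOn _)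
  set u := (InnerProductSpace.toDual ℝ V).symm l
  have hminorant (y : V) : ⟪u, y⟫ + c ≤ φ y := by
    simpa [u] using hlc ⟨y, Set.mem_univ y⟩
  have hsquare (y : V) :
      (1 / 2) * dist (z - u) y ^ 2 + (⟪u, z⟫ - (1 / 2) * ‖u‖ ^ 2 + c)
        ≤ φ y + (1 / 2) * ‖y - z‖ ^ 2 := by
    have hexp : dist (z - u) y ^ 2 = ‖y - z‖ ^ 2 + 2 * ⟪u, y - z⟫ + ‖u‖ ^ 2 := by
      rw [dist_comm, dist_eq_norm, sub_sub_eq_add_sub, add_sub_right_comm, norm_add_sq_real,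
        real_inner_comm]
    rw [hexp, inner_sub_right]
    linarith [hminorant y]
  refine Continuous.exists_forall_le (by fun_prop) (tendsto_atTop_mono hsquare ?_)
  have hdist := (tendsto_pow_atTop two_ne_zero).comp (tendsto_dist_left_cocompact_atTop (z - u))
  exact tendsto_atTop_add_const_right _ _ (hdist.const_mul_atTop (by norm_num))

variable {n : ℕ} {f φ : EuclideanSpace ℝ (Fin n) → ℝ}

theorem inner_sub_nonneg_of_mem_subdiff {p q u v : EuclideanSpace ℝ (Fin n)}
    (hu : u ∈ subdiff φ p) (hv : v ∈ subdiff φ q) : 0 ≤ ⟪u - v, p - q⟫ := by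
  have hpq := hu q
  have hqp := hv p
  rw [← neg_sub p q, inner_neg_right] at hpq
  rw [inner_sub_left]
  linarith

theorem sub_mem_subdiff_of_forall_add_sq_norm_sub_le (hφ : ConvexOn ℝ Set.univ φ)
    {p z : EuclideanSpace ℝ (Fin n)}
    (hp : ∀ y, φ p + (1 / 2) * ‖p - z‖ ^ 2 ≤ φ y + (1 / 2) * ‖y - z‖ ^ 2) :
    z - p ∈ subdiff φ p := by
  intro y
  have hline : ∀ t ∈ Set.Ioo (0 : ℝ) 1,
      φ p + ⟪z - p, y - p⟫ ≤ φ y + t * (1 / 2 * ‖y - p‖ ^ 2) := by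
    rintro t ⟨ht0, ht1⟩
    have hconv := hφ.2 (Set.mem_univ p) (Set.mem_univ y) (sub_nonneg.2 ht1.le) ht0.le
      (sub_add_cancel 1 t)
    have hmin := hp ((1 - t) • p + t • y)
    have hdecomp : (1 - t) • p + t • y - z = t • (y - p) - (z - p) := by module
    rw [hdecomp, norm_sub_sq_real (t • (y - p)), norm_sub_rev p z, real_inner_smul_left, norm_smul,
      mul_pow, Real.norm_eq_abs, sq_abs, real_inner_comm] at hmin
    simp only [smul_eq_mul] at hconv
    refine le_of_mul_le_mul_left ?_ ht0
    linarith
  have hlim : Tendsto (fun t : ℝ => φ y + t * (1 / 2 * ‖y - p‖ ^ 2)) (nhdsWithin 0 (Set.Ioi 0))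
      (nhds (φ y)) := by
    have hcont : Continuous fun t : ℝ => φ y + t * (1 / 2 * ‖y - p‖ ^ 2) := by fun_prop
    simpa using (hcont.tendsto 0).mono_left nhdsWithin_le_nhds
  exact ge_of_tendsto hlim (eventually_of_mem (Ioo_mem_nhdsGT one_pos) hline)

theorem sub_proxPt_mem_subdiff (hφ : ConvexOn ℝ Set.univ φ) (z : EuclideanSpace ℝ (Fin n)) :
    z - proxPt φ z ∈ subdiff φ (proxPt φ z) :=
  sub_mem_subdiff_of_forall_add_sq_norm_sub_le hφ
    (Classical.epsilon_spec (exists_forall_add_sq_norm_sub_le hφ z))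

theorem lipschitzWith_one_proxPt (hφ : ConvexOn ℝ Set.univ φ) : LipschitzWith 1 (proxPt φ) := by
  refine LipschitzWith.mk_one fun z w => ?_
  rw [dist_eq_norm, dist_eq_norm]
  have hmono := inner_sub_nonneg_of_mem_subdiff (sub_proxPt_mem_subdiff hφ z)
    (sub_proxPt_mem_subdiff hφ w)
  set p := proxPt φ z
  set q := proxPt φ w
  have hfirm : ‖p - q‖ * ‖p - q‖ ≤ ‖z - w‖ * ‖p - q‖ :=
    calc ‖p - q‖ * ‖p - q‖ = ⟪p - q, p - q⟫ := (real_inner_self_eq_norm_mul_norm _).symm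
      _ ≤ ⟪z - w, p - q⟫ := by
          rwa [sub_sub_sub_comm, inner_sub_left, sub_nonneg] at hmono
      _ ≤ ‖z - w‖ * ‖p - q‖ := real_inner_le_norm _ _
  rcases (norm_nonneg (p - q)).eq_or_lt with hpq | hpq
  · exact hpq ▸ norm_nonneg _
  · exact le_of_mul_le_mul_right hfirm hpq

theorem continuous_resid (hφ : ConvexOn ℝ Set.univ φ) (hf : Continuous (gradient f)) :
    Continuous (resid f φ) :=
  continuous_id.sub ((lipschitzWith_one_proxPt hφ).continuous.comp (continuous_id.sub hf))

theorem uniformContinuousOn_resid (hφ : ConvexOn ℝ Set.univ φ)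
    {X : Set (EuclideanSpace ℝ (Fin n))} (hf : UniformContinuousOn (gradient f) X) :
    UniformContinuousOn (resid f φ) X := by
  rw [uniformContinuousOn_iff_restrict] at hf ⊢
  have hval : UniformContinuous ((↑) : X → EuclideanSpace ℝ (Fin n)) :=
    uniformContinuous_subtype_val
  exact hval.sub ((lipschitzWith_one_proxPt hφ).uniformContinuous.comp (hval.sub hf))

theorem zero_mem_image_subdiff_of_resid_eq_zero (hφ : ConvexOn ℝ Set.univ φ)
    {x : EuclideanSpace ℝ (Fin n)} (hx : resid f φ x = 0) :
    (0 : EuclideanSpace ℝ (Fin n)) ∈ (fun v => gradient f x + v) '' subdiff φ x := by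
  have hmem := sub_proxPt_mem_subdiff hφ (x - gradient f x)
  rw [← sub_eq_zero.1 hx] at hmem
  exact ⟨_, hmem, by simp⟩

end Prox

section Model

variable {n : ℕ} {f φ : EuclideanSpace ℝ (Fin n) → ℝ}

/-- The quadratic model of `f + φ` around `x` with second-order term `Q`, evaluated at `y`. With
`Q = ∇²f(xᵏ)` it is the paper's `q_k`, with `Q = G_k` its `q̂_k`. -/
def quadModel (f φ : EuclideanSpace ℝ (Fin n) → ℝ)
    (Q : EuclideanSpace ℝ (Fin n) →L[ℝ] EuclideanSpace ℝ (Fin n))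
    (x y : EuclideanSpace ℝ (Fin n)) : ℝ :=
  f x + ⟪gradient f x, y - x⟫ + (1 / 2) * ⟪y - x, Q (y - x)⟫ + φ y

/-- The residual `y - prox_φ(y - ∇f(x) - G(y - x))` of the subproblem of minimizing
`quadModel f φ G x`; the paper's `R_k` for `x = xᵏ` and `G = G_k`. -/
def modelResid (f φ : EuclideanSpace ℝ (Fin n) → ℝ)
    (G : EuclideanSpace ℝ (Fin n) →L[ℝ] EuclideanSpace ℝ (Fin n))
    (x y : EuclideanSpace ℝ (Fin n)) : EuclideanSpace ℝ (Fin n) :=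
  y - proxPt φ (y - gradient f x - G (y - x))

/-- The regularization `H + μI` of a Hessian approximation `H` (the paper's `G_k`). -/
def regularize (H : EuclideanSpace ℝ (Fin n) →L[ℝ] EuclideanSpace ℝ (Fin n)) (μ : ℝ) :
    EuclideanSpace ℝ (Fin n) →L[ℝ] EuclideanSpace ℝ (Fin n) :=
  H + μ • ContinuousLinearMap.id ℝ (EuclideanSpace ℝ (Fin n))

/-- The decrease of `f + φ` from `x` to `y` predicted by the second-order model (`pred_k`). -/
def predictedDecrease (f φ : EuclideanSpace ℝ (Fin n) → ℝ) (x y : EuclideanSpace ℝ (Fin n)) : ℝ :=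
  f x + φ x - quadModel f φ (fderiv ℝ (gradient f) x) x y

/-- The test for rejecting the trial point `y` at the iterate `x`. -/
def IsUnsuccessful (f φ : EuclideanSpace ℝ (Fin n) → ℝ) (c₁ θ pmin κ : ℝ)
    (x y : EuclideanSpace ℝ (Fin n)) : Prop :=
  predictedDecrease f φ x y
      ≤ pmin * (1 - θ) * ‖y - x‖ * min ‖resid f φ x‖ (‖resid f φ x‖ ^ κ) ∨
    (f x + φ x - (f y + φ y)) / predictedDecrease f φ x y ≤ c₁

variable {G H : EuclideanSpace ℝ (Fin n) →L[ℝ] EuclideanSpace ℝ (Fin n)}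
  {x y : EuclideanSpace ℝ (Fin n)} {μ h θ c₁ pmin κ : ℝ}

theorem modelResid_self : modelResid f φ G x x = resid f φ x := by
  rw [modelResid, resid, sub_self, map_zero, sub_zero]

theorem norm_modelResid_sub_le (hφ : ConvexOn ℝ Set.univ φ) (y y' : EuclideanSpace ℝ (Fin n)) :
    ‖modelResid f φ G x y - modelResid f φ G x y'‖ ≤ (2 + ‖G‖) * ‖y - y'‖ := by
  have hprox := (lipschitzWith_one_proxPt hφ).norm_sub_le
    (y - gradient f x - G (y - x)) (y' - gradient f x - G (y' - x))
  have hargs : y - gradient f x - G (y - x) - (y' - gradient f x - G (y' - x))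
      = (y - y') - G (y - y') := by
    simp only [map_sub]
    abel
  rw [hargs, NNReal.coe_one, one_mul] at hprox
  rw [modelResid, modelResid, sub_sub_sub_comm]
  linarith [norm_sub_le (y - y') (proxPt φ (y - gradient f x - G (y - x))
    - proxPt φ (y' - gradient f x - G (y' - x))), norm_sub_le (y - y') (G (y - y')),
    G.le_opNorm (y - y')]

theorem inner_apply_sub_le_mul_norm_modelResid_sub (hφ : ConvexOn ℝ Set.univ φ)
    (y y' : EuclideanSpace ℝ (Fin n)) :
    ⟪G (y - y'), y - y'⟫
      ≤ (1 + ‖G‖) * ‖modelResid f φ G x y - modelResid f φ G x y'‖ * ‖y - y'‖ := by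
  have hmono := inner_sub_nonneg_of_mem_subdiff
    (sub_proxPt_mem_subdiff hφ (y - gradient f x - G (y - x)))
    (sub_proxPt_mem_subdiff hφ (y' - gradient f x - G (y' - x)))
  set D := y - y'
  set e := modelResid f φ G x y - modelResid f φ G x y' with he
  have hsubgrad : y - gradient f x - G (y - x) - proxPt φ (y - gradient f x - G (y - x))
      - (y' - gradient f x - G (y' - x) - proxPt φ (y' - gradient f x - G (y' - x)))
      = e - G D := by
    simp only [he, D, modelResid, map_sub]
    abel
  have hprox : proxPt φ (y - gradient f x - G (y - x))
      - proxPt φ (y' - gradient f x - G (y' - x)) = D - e := by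
    simp only [he, D, modelResid]
    abel
  rw [hsubgrad, hprox] at hmono
  calc ⟪G D, D⟫ ≤ ⟪e, D⟫ + ⟪G D, e⟫ - ⟪e, e⟫ := by
        simp only [inner_sub_left, inner_sub_right] at hmono
        linarith
    _ ≤ ‖e‖ * ‖D‖ + ‖G‖ * ‖D‖ * ‖e‖ := by
        linarith [real_inner_le_norm e D, real_inner_self_nonneg (x := e),
          (real_inner_le_norm (G D) e).trans
            (mul_le_mul_of_nonneg_right (G.le_opNorm D) (norm_nonneg e))]
    _ = (1 + ‖G‖) * ‖e‖ * ‖D‖ := by ring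

theorem norm_regularize_le (hH : ‖H‖ ≤ h) (hμ : 0 ≤ μ) :
    ‖regularize H μ‖ ≤ h + μ := by
  refine norm_add_le_of_le hH ?_
  rw [norm_smul, Real.norm_of_nonneg hμ]
  exact mul_le_of_le_one_right hμ ContinuousLinearMap.norm_id_le

theorem inner_regularize_apply (v : EuclideanSpace ℝ (Fin n)) :
    ⟪v, (regularize H μ) v⟫ = ⟪v, H v⟫ + μ * ‖v‖ ^ 2 := by
  rw [regularize, add_apply, smul_apply, ContinuousLinearMap.id_apply, inner_add_right,
    real_inner_smul_right, real_inner_self_eq_norm_sq]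

theorem norm_sub_le_four_mul_norm_resid (hφ : ConvexOn ℝ Set.univ φ) (hH : ‖H‖ ≤ h)
    (hμ : 1 + 3 * h ≤ μ)
    (hinex : ‖modelResid f φ (regularize H μ) x y‖ ≤ ‖resid f φ x‖) :
    ‖y - x‖ ≤ 4 * ‖resid f φ x‖ := by
  set G := regularize H μ with hG
  have hh : 0 ≤ h := (norm_nonneg H).trans hH
  have hnormG : ‖G‖ ≤ h + μ := norm_regularize_le hH (by linarith)
  have hcurv : (μ - h) * ‖y - x‖ ^ 2 ≤ ⟪G (y - x), y - x⟫ := by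
    rw [real_inner_comm, hG, inner_regularize_apply]
    linarith [(abs_le.1 (abs_inner_apply_self_le hH (y - x))).1]
  have hresid : ‖modelResid f φ G x y - modelResid f φ G x x‖ ≤ 2 * ‖resid f φ x‖ := by
    rw [modelResid_self]
    linarith [norm_sub_le (modelResid f φ G x y) (resid f φ x)]
  have hstep : (1 + h + μ) * (‖y - x‖ * ‖y - x‖)
      ≤ (1 + h + μ) * (4 * ‖resid f φ x‖ * ‖y - x‖) :=
    calc (1 + h + μ) * (‖y - x‖ * ‖y - x‖) ≤ 2 * ((μ - h) * ‖y - x‖ ^ 2) := by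
          rw [← sq, ← mul_assoc]
          gcongr
          linarith
      _ ≤ 2 * ((1 + ‖G‖) * ‖modelResid f φ G x y - modelResid f φ G x x‖ * ‖y - x‖) := by
          exact mul_le_mul_of_nonneg_left
            (hcurv.trans (inner_apply_sub_le_mul_norm_modelResid_sub hφ y x)) two_pos.le
      _ ≤ 2 * ((1 + (h + μ)) * (2 * ‖resid f φ x‖) * ‖y - x‖) := by gcongr; linarith
      _ = (1 + h + μ) * (4 * ‖resid f φ x‖ * ‖y - x‖) := by ring
  rcases (norm_nonneg (y - x)).eq_or_lt with hxy | hxy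
  · rw [← hxy]
    positivity
  · exact le_of_mul_le_mul_right (le_of_mul_le_mul_left hstep (by linarith)) hxy

theorem one_sub_mul_norm_resid_le (hφ : ConvexOn ℝ Set.univ φ)
    (hinex : ‖modelResid f φ G x y‖ ≤ θ * ‖resid f φ x‖) :
    (1 - θ) * ‖resid f φ x‖ ≤ (2 + ‖G‖) * ‖y - x‖ := by
  have hdiff := norm_modelResid_sub_le (f := f) (G := G) (x := x) hφ y x
  rw [modelResid_self] at hdiff
  linarith [norm_le_norm_add_norm_sub (modelResid f φ G x y) (resid f φ x)]

theorem mul_sq_norm_sub_le_predictedDecrease (hQ : ‖fderiv ℝ (gradient f) x‖ ≤ h) (hH : ‖H‖ ≤ h)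
    (hmodel : quadModel f φ (regularize H μ) x y ≤ f x + φ x) :
    (μ - 2 * h) / 2 * ‖y - x‖ ^ 2 ≤ predictedDecrease f φ x y := by
  rw [quadModel, inner_regularize_apply] at hmodel
  rw [predictedDecrease, quadModel]
  linarith [(abs_le.1 (abs_inner_apply_self_le hQ (y - x))).2,
    (abs_le.1 (abs_inner_apply_self_le hH (y - x))).1]

theorem add_sub_quadModel_le (hf : ContDiff ℝ 2 f) {s : Set (EuclideanSpace ℝ (Fin n))}
    (hs : Convex ℝ s) (hh : ∀ z ∈ s, ‖fderiv ℝ (gradient f) z‖ ≤ h) (hx : x ∈ s) (hy : y ∈ s) :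
    f y + φ y - quadModel f φ (fderiv ℝ (gradient f) x) x y ≤ 3 / 2 * h * ‖y - x‖ ^ 2 := by
  have htaylor := abs_sub_sub_inner_gradient_le hs
    (fun z _ => (hf.differentiable two_ne_zero).differentiableAt)
    (fun z _ => ((contDiff_one_gradient hf).differentiable one_ne_zero).differentiableAt) hh hx hy
  rw [quadModel]
  linarith [(abs_le.1 htaylor).2, (abs_le.1 (abs_inner_apply_self_le (hh x hx) (y - x))).1]

theorem norm_sub_pos_of_resid_ne_zero (hφ : ConvexOn ℝ Set.univ φ) (hθ : θ < 1)
    (hr : resid f φ x ≠ 0) (hinex : ‖modelResid f φ G x y‖ ≤ θ * ‖resid f φ x‖) :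
    0 < ‖y - x‖ :=
  have hpos : 0 < (1 - θ) * ‖resid f φ x‖ := mul_pos (sub_pos.2 hθ) (norm_pos_iff.2 hr)
  pos_of_mul_pos_right (hpos.trans_le (one_sub_mul_norm_resid_le hφ hinex)) (by positivity)

theorem mul_norm_resid_lt_predictedDecrease (hφ : ConvexOn ℝ Set.univ φ)
    (hQ : ‖fderiv ℝ (gradient f) x‖ ≤ h) (hH : ‖H‖ ≤ h) (hθ : θ < 1) (hpmin : 0 ≤ pmin)
    (hμ : 0 ≤ μ) (hpred : pmin * (2 + h + μ) < (μ - 2 * h) / 2) (hr : resid f φ x ≠ 0)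
    (hinex : ‖modelResid f φ (regularize H μ) x y‖ ≤ θ * ‖resid f φ x‖)
    (hmodel : quadModel f φ (regularize H μ) x y ≤ f x + φ x) :
    pmin * (1 - θ) * ‖y - x‖ * ‖resid f φ x‖ < predictedDecrease f φ x y := by
  have hd := norm_sub_pos_of_resid_ne_zero hφ hθ hr hinex
  have hresid : (1 - θ) * ‖resid f φ x‖ ≤ (2 + h + μ) * ‖y - x‖ :=
    (one_sub_mul_norm_resid_le hφ hinex).trans <| by
      rw [add_assoc]
      gcongr
      exact norm_regularize_le hH hμ
  calc pmin * (1 - θ) * ‖y - x‖ * ‖resid f φ x‖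
      = pmin * ((1 - θ) * ‖resid f φ x‖) * ‖y - x‖ := by ring
    _ ≤ pmin * ((2 + h + μ) * ‖y - x‖) * ‖y - x‖ := by gcongr
    _ = pmin * (2 + h + μ) * ‖y - x‖ ^ 2 := by ring
    _ < (μ - 2 * h) / 2 * ‖y - x‖ ^ 2 := by gcongr
    _ ≤ predictedDecrease f φ x y := mul_sq_norm_sub_le_predictedDecrease hQ hH hmodel

theorem not_isUnsuccessful (hf : ContDiff ℝ 2 f) (hφ : ConvexOn ℝ Set.univ φ)
    {s : Set (EuclideanSpace ℝ (Fin n))} (hs : Convex ℝ s)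
    (hh : ∀ z ∈ s, ‖fderiv ℝ (gradient f) z‖ ≤ h) (hx : x ∈ s) (hy : y ∈ s) (hH : ‖H‖ ≤ h)
    (hθ : θ < 1) (hpmin : 0 ≤ pmin) (hμ : 0 ≤ μ) (hpred : pmin * (2 + h + μ) < (μ - 2 * h) / 2)
    (hared : 3 / 2 * h < (1 - c₁) * ((μ - 2 * h) / 2)) (hc₁ : c₁ < 1) (hr : resid f φ x ≠ 0)
    (hinex : ‖modelResid f φ (regularize H μ) x y‖ ≤ θ * ‖resid f φ x‖)
    (hmodel : quadModel f φ (regularize H μ) x y ≤ f x + φ x) :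
    ¬IsUnsuccessful f φ c₁ θ pmin κ x y := by
  have hthreshold :=
    mul_norm_resid_lt_predictedDecrease hφ (hh x hx) hH hθ hpmin hμ hpred hr hinex hmodel
  have hpos : 0 < predictedDecrease f φ x y := lt_of_le_of_lt (by positivity) hthreshold
  have hd := norm_sub_pos_of_resid_ne_zero hφ hθ hr hinex
  have hcurvature : 3 / 2 * h * ‖y - x‖ ^ 2 < (1 - c₁) * predictedDecrease f φ x y :=
    calc 3 / 2 * h * ‖y - x‖ ^ 2 < (1 - c₁) * ((μ - 2 * h) / 2) * ‖y - x‖ ^ 2 := by gcongr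
      _ = (1 - c₁) * ((μ - 2 * h) / 2 * ‖y - x‖ ^ 2) := mul_assoc _ _ _
      _ ≤ (1 - c₁) * predictedDecrease f φ x y := by
          gcongr
          exact mul_sq_norm_sub_le_predictedDecrease (hh x hx) hH hmodel
  rw [IsUnsuccessful, not_or, not_le, not_le]
  constructor
  · exact (mul_le_mul_of_nonneg_left (min_le_left _ _) (by positivity)).trans_lt hthreshold
  · rw [lt_div_iff₀ hpos]
    have htaylor := add_sub_quadModel_le (φ := φ) hf hs hh hx hy
    rw [predictedDecrease] at hcurvature ⊢
    linarith

theorem eventually_forall_not_isUnsuccessful (hf : ContDiff ℝ 2 f) (hφ : ConvexOn ℝ Set.univ φ)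
    (hθ : θ < 1) (hc₁ : c₁ < 1) (hpmin : 0 ≤ pmin) (hpmin' : pmin < 1 / 2) (B C : ℝ) :
    ∀ᶠ μ in atTop, ∀ x y H, ‖x‖ ≤ B → ‖H‖ ≤ C → resid f φ x ≠ 0 →
      ‖modelResid f φ (regularize H μ) x y‖ ≤ θ * ‖resid f φ x‖ →
      quadModel f φ (regularize H μ) x y ≤ f x + φ x →
      ¬IsUnsuccessful f φ c₁ θ pmin κ x y := by
  have hcompact (r : ℝ) : IsCompact (closedBall (0 : EuclideanSpace ℝ (Fin n)) r) :=
    isCompact_closedBall 0 r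
  obtain ⟨ρ, hρ⟩ := (hcompact B).exists_bound_of_continuousOn
    (continuous_resid hφ (contDiff_one_gradient hf).continuous).continuousOn
  obtain ⟨L, hL⟩ := (hcompact (B + 4 * ρ)).exists_bound_of_continuousOn
    (continuous_fderiv_gradient hf).continuousOn
  set h := max C L
  have hpred : ∀ᶠ μ : ℝ in atTop, pmin * (2 + h + μ) < (μ - 2 * h) / 2 := by
    filter_upwards [(tendsto_id.const_mul_atTop (sub_pos.2 hpmin')).eventually_gt_atTop
      (pmin * (2 + h) + h)] with μ hμ
    rw [id] at hμ
    linarith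
  have hared : ∀ᶠ μ : ℝ in atTop, 3 / 2 * h < (1 - c₁) * ((μ - 2 * h) / 2) := by
    filter_upwards [(tendsto_id.const_mul_atTop (sub_pos.2 hc₁)).eventually_gt_atTop
      (3 * h + (1 - c₁) * (2 * h))] with μ hμ
    rw [id] at hμ
    linarith
  filter_upwards [hpred, hared, eventually_ge_atTop 0, eventually_ge_atTop (1 + 3 * h)]
    with μ hpred hared hμ hμ' x y H hx hH hr hinex hmodel
  have hresid := hρ x (mem_closedBall_zero_iff.2 hx)
  have hinex' := hinex.trans (mul_le_of_le_one_left (norm_nonneg _) hθ.le)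
  have hstep := norm_sub_le_four_mul_norm_resid hφ (hH.trans (le_max_left C L)) hμ' hinex'
  refine not_isUnsuccessful hf hφ (convex_closedBall 0 (B + 4 * ρ))
    (fun z hz => (hL z hz).trans (le_max_right C L)) ?_ ?_ (hH.trans (le_max_left C L)) hθ hpmin hμ
    hpred hared hc₁ hr hinex hmodel
  · rw [mem_closedBall_zero_iff]
    linarith [norm_nonneg (resid f φ x)]
  · rw [mem_closedBall_zero_iff]
    linarith [norm_le_norm_add_norm_sub' y x]

theorem mul_le_sub_of_not_isUnsuccessful (hc₁ : 0 ≤ c₁) (hθ : θ ≤ 1) (hpmin : 0 ≤ pmin)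
    (hxy : ¬IsUnsuccessful f φ c₁ θ pmin κ x y) :
    c₁ * (pmin * (1 - θ) * ‖y - x‖ * min ‖resid f φ x‖ (‖resid f φ x‖ ^ κ))
      ≤ f x + φ x - (f y + φ y) := by
  rw [IsUnsuccessful, not_or, not_le, not_le] at hxy
  obtain ⟨hpred, hratio⟩ := hxy
  have hpos : 0 < predictedDecrease f φ x y := lt_of_le_of_lt (by positivity) hpred
  rw [lt_div_iff₀ hpos] at hratio
  exact (mul_le_mul_of_nonneg_left hpred.le hc₁).trans hratio.le

end Model

/-- A run of the regularized proximal Newton method without line search for minimizing `f + φ`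
that never meets a stationary point. The Hessian approximation `H k` is an arbitrary operator,
bounded as long as the iterates are, and after an accepted step `ν` may be updated by any rule
that keeps it at most `νbar` and does not push it below `νmin`. -/
structure ProxNewtonRun {n : ℕ} (f φ : EuclideanSpace ℝ (Fin n) → ℝ) where
  (c₁ σ η θ α νmin νbar δ pmin κ : ℝ)
  (x xhat : ℕ → EuclideanSpace ℝ (Fin n))
  (ν rbar : ℕ → ℝ)
  (H : ℕ → EuclideanSpace ℝ (Fin n) →L[ℝ] EuclideanSpace ℝ (Fin n))
  c₁_pos : 0 < c₁
  c₁_lt_one : c₁ < 1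
  one_lt_σ : 1 < σ
  η_le_one : η ≤ 1
  θ_lt_one : θ < 1
  α_nonneg : 0 ≤ α
  νmin_pos : 0 < νmin
  δ_nonneg : 0 ≤ δ
  pmin_pos : 0 < pmin
  pmin_lt_half : pmin < 1 / 2
  κ_nonneg : 0 ≤ κ
  resid_ne_zero (k : ℕ) : resid f φ (x k) ≠ 0
  H_bounded (B : ℝ) : ∃ C, ∀ k, ‖x k‖ ≤ B → ‖H k‖ ≤ C
  norm_modelResid_le (k : ℕ) :
    ‖modelResid f φ (regularize (H k) (ν k * rbar k ^ δ)) (x k) (xhat k)‖ ≤ θ * ‖resid f φ (x k)‖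
  mul_sq_norm_sub_le (k : ℕ) : α * (ν k * rbar k ^ δ) / 2 * ‖xhat k - x k‖ ^ 2 ≤
    f (x k) + φ (x k) - quadModel f φ (regularize (H k) (ν k * rbar k ^ δ)) (x k) (xhat k)
  ν_zero_pos : 0 < ν 0
  update_of_isUnsuccessful (k : ℕ) : IsUnsuccessful f φ c₁ θ pmin κ (x k) (xhat k) →
    x (k + 1) = x k ∧ ν (k + 1) = σ * ν k
  update_of_not_isUnsuccessful (k : ℕ) : ¬IsUnsuccessful f φ c₁ θ pmin κ (x k) (xhat k) →
    x (k + 1) = xhat k ∧ ν (k + 1) ∈ Set.Icc (min (ν k) νmin) νbar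
  rbar_zero : rbar 0 = ‖resid f φ (x 0)‖
  rbar_succ (k : ℕ) :
    (‖resid f φ (x (k + 1))‖ ≤ η * rbar k → rbar (k + 1) = ‖resid f φ (x (k + 1))‖) ∧
      (¬‖resid f φ (x (k + 1))‖ ≤ η * rbar k → rbar (k + 1) = rbar k)

namespace ProxNewtonRun

variable {n : ℕ} {f φ : EuclideanSpace ℝ (Fin n) → ℝ} (run : ProxNewtonRun f φ)

/-- The regularization parameter `μ_k`. -/
def μ (k : ℕ) : ℝ := run.ν k * run.rbar k ^ run.δ

/-- The regularized Hessian approximation `G_k`. -/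
def G (k : ℕ) : EuclideanSpace ℝ (Fin n) →L[ℝ] EuclideanSpace ℝ (Fin n) :=
  regularize (run.H k) (run.μ k)

/-- The objective value `F(xᵏ)`. -/
def objective (k : ℕ) : ℝ := f (run.x k) + φ (run.x k)

/-- Iteration `k` rejects its trial point. -/
def Unsuccessful (k : ℕ) : Prop :=
  IsUnsuccessful f φ run.c₁ run.θ run.pmin run.κ (run.x k) (run.xhat k)

theorem ν_pos (k : ℕ) : 0 < run.ν k := by
  induction k with
  | zero => exact run.ν_zero_pos
  | succ k ih =>
    by_cases hk : run.Unsuccessful k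
    · rw [(run.update_of_isUnsuccessful k hk).2]
      exact mul_pos (one_pos.trans run.one_lt_σ) ih
    · exact (lt_min ih run.νmin_pos).trans_le (run.update_of_not_isUnsuccessful k hk).2.1

theorem le_rbar {ε : ℝ} (hε : ∀ k, ε ≤ ‖resid f φ (run.x k)‖) (k : ℕ) : ε ≤ run.rbar k := by
  induction k with
  | zero => exact run.rbar_zero ▸ hε 0
  | succ k ih =>
    by_cases hk : ‖resid f φ (run.x (k + 1))‖ ≤ run.η * run.rbar k
    · exact (run.rbar_succ k).1 hk ▸ hε (k + 1)
    · exact (run.rbar_succ k).2 hk ▸ ih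

theorem rbar_nonneg (k : ℕ) : 0 ≤ run.rbar k := run.le_rbar (fun _ => norm_nonneg _) k

theorem antitone_rbar : Antitone run.rbar := by
  refine antitone_nat_of_succ_le fun k => ?_
  by_cases hk : ‖resid f φ (run.x (k + 1))‖ ≤ run.η * run.rbar k
  · rw [(run.rbar_succ k).1 hk]
    exact hk.trans (mul_le_of_le_one_left (run.rbar_nonneg k) run.η_le_one)
  · exact ((run.rbar_succ k).2 hk).le

theorem μ_nonneg (k : ℕ) : 0 ≤ run.μ k :=
  mul_nonneg (run.ν_pos k).le (Real.rpow_nonneg (run.rbar_nonneg k) _)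

theorem quadModel_le (k : ℕ) :
    quadModel f φ (run.G k) (run.x k) (run.xhat k) ≤ run.objective k := by
  have hα := run.α_nonneg
  have hμ := run.μ_nonneg k
  have hnonneg : 0 ≤ run.α * run.μ k / 2 * ‖run.xhat k - run.x k‖ ^ 2 := by positivity
  exact sub_nonneg.1 (hnonneg.trans (run.mul_sq_norm_sub_le k))

theorem mul_norm_sub_le_objective_sub (k : ℕ) :
    run.c₁ * (run.pmin * (1 - run.θ) * ‖run.x (k + 1) - run.x k‖ *
        min ‖resid f φ (run.x k)‖ (‖resid f φ (run.x k)‖ ^ run.κ))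
      ≤ run.objective k - run.objective (k + 1) := by
  by_cases hk : run.Unsuccessful k
  · simp only [objective, (run.update_of_isUnsuccessful k hk).1, sub_self, norm_zero, mul_zero,
      zero_mul, le_refl]
  · simp only [objective, (run.update_of_not_isUnsuccessful k hk).1]
    exact mul_le_sub_of_not_isUnsuccessful run.c₁_pos.le run.θ_lt_one.le run.pmin_pos.le hk

theorem exists_mul_dist_le_objective_sub {ε : ℝ} (hε : 0 < ε) :
    ∃ c > 0, ∀ k, ε ≤ ‖resid f φ (run.x k)‖ →
      c * dist (run.x k) (run.x (k + 1)) ≤ run.objective k - run.objective (k + 1) := by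
  have hc₁ := run.c₁_pos
  have hpmin := run.pmin_pos
  have hθ := sub_pos.2 run.θ_lt_one
  refine ⟨run.c₁ * (run.pmin * (1 - run.θ) * min ε (ε ^ run.κ)), by positivity, fun k hk => ?_⟩
  calc run.c₁ * (run.pmin * (1 - run.θ) * min ε (ε ^ run.κ)) * dist (run.x k) (run.x (k + 1))
      = run.c₁ * (run.pmin * (1 - run.θ) * ‖run.x (k + 1) - run.x k‖ * min ε (ε ^ run.κ)) := by
        rw [dist_eq_norm', mul_assoc, mul_right_comm _ _ ‖_‖]
    _ ≤ run.c₁ * (run.pmin * (1 - run.θ) * ‖run.x (k + 1) - run.x k‖ *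
          min ‖resid f φ (run.x k)‖ (‖resid f φ (run.x k)‖ ^ run.κ)) := by
        gcongr
        exact run.κ_nonneg
    _ ≤ run.objective k - run.objective (k + 1) := run.mul_norm_sub_le_objective_sub k

theorem antitone_objective : Antitone run.objective := by
  refine antitone_nat_of_succ_le fun k => ?_
  obtain ⟨c, hc, hdec⟩ :=
    run.exists_mul_dist_le_objective_sub (norm_pos_iff.2 (run.resid_ne_zero k))
  exact sub_nonneg.1 ((mul_nonneg hc.le dist_nonneg).trans (hdec k le_rfl))

theorem summable_dist (hbdd : BddBelow (Set.range run.objective)) {ε : ℝ} (hε : 0 < ε)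
    (hlow : ∀ k, ε ≤ ‖resid f φ (run.x k)‖) :
    Summable fun k => dist (run.x k) (run.x (k + 1)) := by
  obtain ⟨c, hc, hdec⟩ := run.exists_mul_dist_le_objective_sub hε
  exact summable_dist_of_mul_dist_le run.antitone_objective hbdd hc fun k => hdec k (hlow k)

theorem exists_forall_not_unsuccessful_of_le_μ (hf : ContDiff ℝ 2 f) (hφ : ConvexOn ℝ Set.univ φ)
    {B : ℝ} (hB : ∀ k, ‖run.x k‖ ≤ B) : ∃ M, ∀ k, M ≤ run.μ k → ¬run.Unsuccessful k := by
  obtain ⟨C, hC⟩ := run.H_bounded B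
  obtain ⟨M, hM⟩ := eventually_atTop.1 (eventually_forall_not_isUnsuccessful hf hφ run.θ_lt_one
    run.c₁_lt_one run.pmin_pos.le run.pmin_lt_half B C)
  exact ⟨M, fun k hk => hM _ hk _ _ _ (hB k) (hC k (hB k)) (run.resid_ne_zero k)
    (run.norm_modelResid_le k) (run.quadModel_le k)⟩

theorem exists_forall_ν_le (hf : ContDiff ℝ 2 f) (hφ : ConvexOn ℝ Set.univ φ)
    {B : ℝ} (hB : ∀ k, ‖run.x k‖ ≤ B) {ε : ℝ} (hε : 0 < ε)
    (hlow : ∀ k, ε ≤ ‖resid f φ (run.x k)‖) : ∃ V, ∀ k, run.ν k ≤ V := by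
  obtain ⟨M, hM⟩ := run.exists_forall_not_unsuccessful_of_le_μ hf hφ hB
  have hν_unsuccessful (k : ℕ) (hk : run.Unsuccessful k) : run.ν k ≤ M / ε ^ run.δ := by
    rw [le_div_iff₀ (Real.rpow_pos_of_pos hε _)]
    refine le_trans ?_ (not_le.1 fun hμ => hM k hμ hk).le
    exact mul_le_mul_of_nonneg_left
      (Real.rpow_le_rpow hε.le (run.le_rbar hlow k) run.δ_nonneg) (run.ν_pos k).le
  refine ⟨max (run.ν 0) (max run.νbar (run.σ * (M / ε ^ run.δ))), fun k => ?_⟩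
  cases k with
  | zero => exact le_max_left _ _
  | succ k =>
    by_cases hk : run.Unsuccessful k
    · rw [(run.update_of_isUnsuccessful k hk).2]
      exact le_max_of_le_right (le_max_of_le_right (mul_le_mul_of_nonneg_left
        (hν_unsuccessful k hk) (one_pos.trans run.one_lt_σ).le))
    · exact le_max_of_le_right
        (le_max_of_le_left (run.update_of_not_isUnsuccessful k hk).2.2)

theorem exists_pos_forall_le_norm_xhat_sub (hφ : ConvexOn ℝ Set.univ φ)
    {B : ℝ} (hB : ∀ k, ‖run.x k‖ ≤ B) {V : ℝ} (hV : ∀ k, run.ν k ≤ V) {ε : ℝ} (hε : 0 < ε)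
    (hlow : ∀ k, ε ≤ ‖resid f φ (run.x k)‖) : ∃ s > 0, ∀ k, s ≤ ‖run.xhat k - run.x k‖ := by
  obtain ⟨C, hC⟩ := run.H_bounded B
  have hG (k : ℕ) : ‖run.G k‖ ≤ C + V * run.rbar 0 ^ run.δ := by
    refine (norm_regularize_le (hC k (hB k)) (run.μ_nonneg k)).trans (add_le_add_right ?_ C)
    exact mul_le_mul (hV k)
      (Real.rpow_le_rpow (run.rbar_nonneg k) (run.antitone_rbar k.zero_le) run.δ_nonneg)
      (Real.rpow_nonneg (run.rbar_nonneg k) _) ((run.ν_pos k).le.trans (hV k))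
  have hden : 0 < 2 + (C + V * run.rbar 0 ^ run.δ) := by linarith [hG 0, norm_nonneg (run.G 0)]
  have hθ : 0 < 1 - run.θ := sub_pos.2 run.θ_lt_one
  refine ⟨(1 - run.θ) * ε / (2 + (C + V * run.rbar 0 ^ run.δ)), by positivity, fun k => ?_⟩
  rw [div_le_iff₀' hden]
  calc (1 - run.θ) * ε ≤ (1 - run.θ) * ‖resid f φ (run.x k)‖ := by gcongr; exact hlow k
    _ ≤ (2 + ‖run.G k‖) * ‖run.xhat k - run.x k‖ :=
        one_sub_mul_norm_resid_le hφ (run.norm_modelResid_le k)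
    _ ≤ (2 + (C + V * run.rbar 0 ^ run.δ)) * ‖run.xhat k - run.x k‖ := by gcongr; exact hG k

theorem frequently_norm_resid_lt (hf : ContDiff ℝ 2 f) (hφ : ConvexOn ℝ Set.univ φ)
    (hbdd : BddBelow (Set.range run.objective)) {ε : ℝ} (hε : 0 < ε) :
    ∃ᶠ k in atTop, ‖resid f φ (run.x k)‖ < ε := by
  by_contra hcon
  rw [not_frequently] at hcon
  obtain ⟨e, he, hlow⟩ := exists_pos_forall_le_of_eventually_le
    (fun k => norm_pos_iff.2 (run.resid_ne_zero k)) hε (hcon.mono fun _ => not_lt.1)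
  have hsum := run.summable_dist hbdd he hlow
  obtain ⟨B, hB⟩ := (cauchySeq_of_summable_dist hsum).isBounded_range.exists_norm_le
  rw [Set.forall_mem_range] at hB
  obtain ⟨V, hV⟩ := run.exists_forall_ν_le hf hφ hB he hlow
  obtain ⟨s, hs, hstep⟩ := run.exists_pos_forall_le_norm_xhat_sub hφ hB hV he hlow
  have hunsuccessful : ∀ᶠ k in atTop, run.Unsuccessful k := by
    filter_upwards [hsum.tendsto_atTop_zero.eventually_lt_const hs] with k hk
    by_contra hsucc
    rw [(run.update_of_not_isUnsuccessful k hsucc).1, dist_eq_norm'] at hk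
    exact hk.not_ge (hstep k)
  have hν : Tendsto run.ν atTop atTop :=
    tendsto_atTop_of_eventually_eq_mul run.one_lt_σ run.ν_pos
      (hunsuccessful.mono fun k hk => (run.update_of_isUnsuccessful k hk).2)
  obtain ⟨k, hk⟩ := (hν.eventually_gt_atTop V).exists
  exact hk.not_ge (hV k)

theorem tendsto_norm_resid (hf : ContDiff ℝ 2 f) (hφ : ConvexOn ℝ Set.univ φ)
    (hbdd : BddBelow (Set.range run.objective)) {X : Set (EuclideanSpace ℝ (Fin n))}
    (hX : ∀ k, run.x k ∈ X) (hUC : UniformContinuousOn (gradient f) X) :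
    Tendsto (fun k => ‖resid f φ (run.x k)‖) atTop (nhds 0) := by
  have hresid : UniformContinuousOn (fun y => ‖resid f φ y‖) X :=
    uniformContinuous_norm.comp_uniformContinuousOn (uniformContinuousOn_resid hφ hUC)
  exact tendsto_zero_of_frequently_lt_of_mul_dist_le (g := fun y => ‖resid f φ y‖) hresid hX
    (fun _ => norm_nonneg _) run.antitone_objective hbdd
    (fun _ hε => run.exists_mul_dist_le_objective_sub hε)
    fun _ hε => run.frequently_norm_resid_lt hf hφ hbdd hε

end ProxNewtonRun

theorem resid_eq_zero_of_mapClusterPt {n : ℕ} {f φ : EuclideanSpace ℝ (Fin n) → ℝ}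
    (hφ : ConvexOn ℝ Set.univ φ) (hf : Continuous (gradient f))
    {x : ℕ → EuclideanSpace ℝ (Fin n)}
    (hx : Tendsto (fun k => ‖resid f φ (x k)‖) atTop (nhds 0)) {z : EuclideanSpace ℝ (Fin n)}
    (hz : MapClusterPt z atTop x) : resid f φ z = 0 :=
  norm_eq_zero.1 <| eq_of_nhds_neBot <|
    (hz.continuousAt_comp (continuous_resid hφ hf).norm.continuousAt).neBot.mono
      (inf_le_inf_left _ hx)

theorem stmt_9_general {n : ℕ} {f φ : EuclideanSpace ℝ (Fin n) → ℝ} (hf : ContDiff ℝ 2 f)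
    (hφ : ConvexOn ℝ Set.univ φ) (run : ProxNewtonRun f φ)
    (hbdd : BddBelow (Set.range run.objective)) {X : Set (EuclideanSpace ℝ (Fin n))}
    (hX : ∀ k, run.x k ∈ X) (hUC : UniformContinuousOn (gradient f) X) :
    Tendsto (fun k => ‖resid f φ (run.x k)‖) atTop (nhds 0) ∧
    ∀ xb, MapClusterPt xb atTop run.x →
      (0 : EuclideanSpace ℝ (Fin n)) ∈ (fun v => gradient f xb + v) '' subdiff φ xb := by
  have hlim := run.tendsto_norm_resid hf hφ hbdd hX hUC
  exact ⟨hlim, fun xb hxb => zero_mem_image_subdiff_of_resid_eq_zero hφ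
    (resid_eq_zero_of_mapClusterPt hφ (contDiff_one_gradient hf).continuous hlim hxb)⟩

theorem neg_lambdaMin_le_norm {m : ℕ}
    (T : EuclideanSpace ℝ (Fin m) →L[ℝ] EuclideanSpace ℝ (Fin m)) : -lambdaMin T ≤ ‖T‖ := by
  rw [neg_le]
  refine Real.le_iInf (fun u => ?_) (neg_nonpos.2 (norm_nonneg T))
  have hu := abs_inner_apply_self_le (le_refl ‖T‖) u.1
  rw [u.2, one_pow, mul_one, real_inner_comm] at hu
  exact (abs_le.1 hu).1

theorem exists_forall_norm_hessian_add_smul_le {n m : ℕ} {f : EuclideanSpace ℝ (Fin n) → ℝ}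
    {ψ : EuclideanSpace ℝ (Fin m) → ℝ} (hf : ContDiff ℝ 2 f) (hψ : ContDiff ℝ 2 ψ)
    {u : EuclideanSpace ℝ (Fin n) → EuclideanSpace ℝ (Fin m)} (hu : Continuous u)
    (P : EuclideanSpace ℝ (Fin n) →L[ℝ] EuclideanSpace ℝ (Fin n)) (a B : ℝ) :
    ∃ C, ∀ z, ‖z‖ ≤ B → ‖fderiv ℝ (gradient f) z
      + (a * max (-lambdaMin (fderiv ℝ (gradient ψ) (u z))) 0) • P‖ ≤ C := by
  have hcont : Continuous fun z =>
      ‖fderiv ℝ (gradient f) z‖ + |a| * ‖fderiv ℝ (gradient ψ) (u z)‖ * ‖P‖ := by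
    have hcontf := continuous_fderiv_gradient hf
    have hcontψ := continuous_fderiv_gradient hψ
    fun_prop
  obtain ⟨C, hC⟩ := (isCompact_closedBall (0 : EuclideanSpace ℝ (Fin n)) B).bddAbove_image
    hcont.continuousOn
  refine ⟨C, fun z hz => le_trans (norm_add_le_of_le le_rfl ?_)
    (hC (Set.mem_image_of_mem _ (mem_closedBall_zero_iff.2 hz)))⟩
  rw [norm_smul, norm_mul, Real.norm_eq_abs, Real.norm_of_nonneg (le_max_right _ _)]
  gcongr
  exact max_le (neg_lambdaMin_le_norm _) (norm_nonneg _)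

theorem mem_Icc_min_of_update {ν ν' νmin νbar t ρ c : ℝ} (hνmin : νmin ≤ νbar)
    (hle : ρ ≤ c → ν' = min ν νbar) (hgt : c < ρ → ν' = min (max t νmin) νbar) :
    ν' ∈ Set.Icc (min ν νmin) νbar := by
  rcases le_or_gt ρ c with hρ | hρ
  · exact hle hρ ▸ ⟨min_le_min_left ν hνmin, min_le_right _ _⟩
  · exact hgt hρ ▸ ⟨(min_le_right _ _).trans (le_min (le_max_right _ _) hνmin), min_le_right _ _⟩

/-- Theorem 4.6: if `∇f` is uniformly continuous on a set `X` containing all iterates, then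
`lim_{k→∞} ‖r(xᵏ)‖ = 0`; in particular every accumulation point `x̄` of `{xᵏ}` is a
stationary point of `F`, i.e. `0 ∈ ∇f(x̄) + ∂φ(x̄)`. -/
theorem stmt_9 {n m : ℕ}
    -- problem data: f(x) = ψ(Ax − b), F = f + φ bounded below, φ convex, ψ C²
    (ψ : EuclideanSpace ℝ (Fin m) → ℝ)
    (A : EuclideanSpace ℝ (Fin n) →L[ℝ] EuclideanSpace ℝ (Fin m))
    (b : EuclideanSpace ℝ (Fin m))
    (φ : EuclideanSpace ℝ (Fin n) → ℝ)
    (hψ : ContDiff ℝ 2 ψ) (hφ : ConvexOn ℝ Set.univ φ)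
    (f F : EuclideanSpace ℝ (Fin n) → ℝ)
    (hf : ∀ y, f y = ψ (A y - b)) (hF : ∀ y, F y = f y + φ y)
    (hFbdd : BddBelow (Set.range F))
    -- algorithm parameters
    (c₁ c₂ σ₁ σ₂ η θ α a νmin ν₀ νbar δ τ pmin κ : ℝ)
    (hc₁ : 0 < c₁) (hc₁' : c₁ < 1) (hc₂ : c₁ < c₂) (hc₂' : c₂ < 1)
    (hσ₁ : 0 < σ₁) (hσ₁' : σ₁ < 1) (hσ₂ : 1 < σ₂)
    (hη : 0 < η) (hη' : η < 1) (hθ : 0 < θ) (hθ' : θ < 1)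
    (hα : 0 < α) (hα' : α < 1) (ha : 1 ≤ a)
    (hνmin : 0 < νmin) (hν₀a : νmin ≤ ν₀) (hν₀b : ν₀ ≤ νbar)
    (hδ0 : 0 < δ) (hδ1 : δ ≤ 1) (hτ : δ ≤ τ)
    (hpmin : 0 < pmin) (hpmin' : pmin < 1 / 2) (hκ : 1 + δ < κ)
    -- iterates and regularization sequences
    (x xhat : ℕ → EuclideanSpace ℝ (Fin n)) (ν rbar μ : ℕ → ℝ)
    (hν0 : ν 0 = ν₀) (hrbar0 : rbar 0 = ‖resid f φ (x 0)‖)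
    (hμ : ∀ k, μ k = ν k * rbar k ^ δ)
    -- Λ_k, H_k + μ_k I =: G_k, the models q_k, q̂_k, and the subproblem residual R_k
    (Λ : ℕ → ℝ)
    (hΛ : ∀ k, Λ k = a * max (-(lambdaMin (fderiv ℝ (gradient ψ) (A (x k) - b)))) 0)
    (G : ℕ → EuclideanSpace ℝ (Fin n) →L[ℝ] EuclideanSpace ℝ (Fin n))
    (hG : ∀ k, G k = fderiv ℝ (gradient f) (x k)
        + Λ k • ((ContinuousLinearMap.adjoint A).comp A)
        + μ k • ContinuousLinearMap.id ℝ (EuclideanSpace ℝ (Fin n)))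
    (q qhat : ℕ → EuclideanSpace ℝ (Fin n) → ℝ)
    (hq : ∀ k y, q k y = f (x k) + ⟪gradient f (x k), y - x k⟫
        + (1 / 2) * ⟪y - x k, (fderiv ℝ (gradient f) (x k)) (y - x k)⟫ + φ y)
    (hqhat : ∀ k y, qhat k y = f (x k) + ⟪gradient f (x k), y - x k⟫
        + (1 / 2) * ⟪y - x k, (G k) (y - x k)⟫ + φ y)
    (R : ℕ → EuclideanSpace ℝ (Fin n) → EuclideanSpace ℝ (Fin n))
    (hR : ∀ k y, R k y = y - proxPt φ (y - gradient f (x k) - (G k) (y - x k)))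
    -- the inexactness criteria satisfied by x̂ᵏ
    (hinex1 : ∀ k, ‖R k (xhat k)‖ ≤
        θ * min ‖resid f φ (x k)‖ (‖resid f φ (x k)‖ ^ (1 + τ)))
    (hinex2 : ∀ k, α * μ k / 2 * ‖xhat k - x k‖ ^ 2 ≤ F (x k) - qhat k (xhat k))
    -- dᵏ, pred_k, ared_k, ρ_k
    (d : ℕ → EuclideanSpace ℝ (Fin n)) (hd : ∀ k, d k = xhat k - x k)
    (pred ared ρ : ℕ → ℝ)
    (hpred : ∀ k, pred k = F (x k) - q k (xhat k))
    (hared : ∀ k, ared k = F (x k) - F (xhat k))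
    (hρ : ∀ k, ρ k = ared k / pred k)
    -- update rules (unsuccessful / successful / highly successful iterations)
    (unsucc : ℕ → Prop)
    (hunsucc : ∀ k, unsucc k ↔
        pred k ≤ pmin * (1 - θ) * ‖d k‖ *
          min ‖resid f φ (x k)‖ (‖resid f φ (x k)‖ ^ κ) ∨ ρ k ≤ c₁)
    (hupd : ∀ k,
        (unsucc k → x (k + 1) = x k ∧ ν (k + 1) = σ₂ * ν k) ∧
        (¬unsucc k → x (k + 1) = xhat k ∧
          (ρ k ≤ c₂ → ν (k + 1) = min (ν k) νbar) ∧
          (c₂ < ρ k → ν (k + 1) = min (max (σ₁ * ν k) νmin) νbar)))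
    (hrbarupd : ∀ k,
        (‖resid f φ (x (k + 1))‖ ≤ η * rbar k → rbar (k + 1) = ‖resid f φ (x (k + 1))‖) ∧
        (¬‖resid f φ (x (k + 1))‖ ≤ η * rbar k → rbar (k + 1) = rbar k))
    -- no iterate is stationary (otherwise the algorithm terminates)
    (hrne : ∀ k, resid f φ (x k) ≠ 0)
    (X : Set (EuclideanSpace ℝ (Fin n)))
    (hX : ∀ k, x k ∈ X)
    (hUC : UniformContinuousOn (gradient f) X) :
    Tendsto (fun k => ‖resid f φ (x k)‖) atTop (nhds 0) ∧
    ∀ xb : EuclideanSpace ℝ (Fin n), MapClusterPt xb atTop x →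
      (0 : EuclideanSpace ℝ (Fin n)) ∈ (fun v => gradient f xb + v) '' subdiff φ xb := by
  obtain rfl : F = fun y => f y + φ y := funext hF
  have hf₂ : ContDiff ℝ 2 f := by
    rw [funext hf]
    exact hψ.comp (A.contDiff.sub contDiff_const)
  obtain rfl : R = fun k => modelResid f φ (G k) (x k) := funext₂ hR
  obtain rfl : qhat = fun k => quadModel f φ (G k) (x k) := funext₂ hqhat
  obtain rfl : G = fun k => regularize (fderiv ℝ (gradient f) (x k) + Λ k • _) (μ k) := funext hG
  obtain rfl : μ = fun k => ν k * rbar k ^ δ := funext hμ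
  have htest (k : ℕ) : unsucc k ↔ IsUnsuccessful f φ c₁ θ pmin κ (x k) (xhat k) := by
    rw [hunsucc, hρ, hared, hpred, hq, hd, IsUnsuccessful, predictedDecrease, quadModel]
  let run : ProxNewtonRun f φ :=
    { c₁, σ := σ₂, η, θ, α, νmin, νbar, δ, pmin, κ, x, xhat, ν, rbar, H := _
      c₁_pos := hc₁, c₁_lt_one := hc₁', one_lt_σ := hσ₂, η_le_one := hη'.le, θ_lt_one := hθ'
      α_nonneg := hα.le, νmin_pos := hνmin, δ_nonneg := hδ0.le, pmin_pos := hpmin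
      pmin_lt_half := hpmin', κ_nonneg := by linarith, resid_ne_zero := hrne
      rbar_zero := hrbar0, rbar_succ := hrbarupd, mul_sq_norm_sub_le := hinex2
      ν_zero_pos := hν0 ▸ hνmin.trans_le hν₀a
      H_bounded := fun B => (exists_forall_norm_hessian_add_smul_le hf₂ hψ
        (A.continuous.sub continuous_const) _ a B).imp fun _ hC k hk => by rw [hΛ]; exact hC _ hk
      norm_modelResid_le := fun k =>
        (hinex1 k).trans (mul_le_mul_of_nonneg_left (min_le_left _ _) hθ.le)
      update_of_isUnsuccessful := fun k hk => (hupd k).1 ((htest k).2 hk)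
      update_of_not_isUnsuccessful := fun k hk => ((hupd k).2 (mt (htest k).1 hk)).imp_right
        fun hν => mem_Icc_min_of_update (hν₀a.trans hν₀b) hν.1 hν.2 }
  exact stmt_9_general hf₂ hφ run
    (hFbdd.mono (Set.range_comp_subset_range x fun y => f y + φ y)) hX hUC
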